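/- arXiv:2102.01854 — 3 statements merged into one kernel-verified Lean document; each statement's English description precedes it below -/
import Mathlib

section
/- Let m be an integer with 0 ≤ m ≤ n, let M ⊆ C satisfy |M| ≤ m, and let A, A' agree on every k-element subset of C disjoint from M. Then for every label i ∈ L, |p_i' − p_i| ≤ 1 − C(n−m,k)/C(n,k). -/
/-!
The `k`-subsets of `C \ M` are `k`-subsets of `C` on which `A` and `A'` agree, and there are
`C(n - |M|, k) ≥ C(n - m, k)` of them. A subsample can therefore count for label `i` under one of
`A`, `A'` and not the other only if it is one of the remaining `C(n,k) - C(n - |M|, k)` subsamples,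
so the two counts of `i` differ by at most that number; dividing by `C(n,k)` gives the bound.
-/

/-- The label probability: the fraction of the `C(n,k)` subsamples (k-element
subsets of the client set `C`) on which the prediction function `A` predicts
label `i`. -/
noncomputable def labelProb {ι L : Type*} (n k : ℕ) (C : Finset ι)
    (A : Finset ι → L) (i : L) : ℝ :=
  letI := Classical.decEq L
  (((C.powersetCard k).filter (fun s => A s = i)).card : ℝ) / (n.choose k : ℝ)

/-- If `A` and `B` agree on the `k`-subsets of `C` disjoint from `M`, the count of label `i` under
`B` exceeds that under `A` by at most the number of `k`-subsets meeting `M`; the bound is written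
additively to avoid truncated subtraction. -/
theorem card_filter_add_choose_le {ι L : Type*} [DecidableEq ι] [DecidableEq L]
    (n k m : ℕ) (C M : Finset ι) (hC : C.card = n) (hMC : M ⊆ C) (hMcard : M.card ≤ m)
    (A B : Finset ι → L)
    (hagree : ∀ s ∈ C.powersetCard k, s ∩ M = ∅ → A s = B s) (i : L) :
    ((C.powersetCard k).filter (fun s => B s = i)).card + (n - m).choose k ≤
      ((C.powersetCard k).filter (fun s => A s = i)).card + n.choose k := by
  have hsub : (C \ M).powersetCard k ⊆ C.powersetCard k :=
    Finset.powersetCard_mono Finset.sdiff_subset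
  have hcover : (C.powersetCard k).filter (fun s => B s = i) ⊆
      (C.powersetCard k).filter (fun s => A s = i) ∪
        (C.powersetCard k \ (C \ M).powersetCard k) := by
    intro s hs
    obtain ⟨hsC, hsi⟩ := Finset.mem_filter.1 hs
    by_cases hT : s ∈ (C \ M).powersetCard k
    · have hdisj : s ∩ M = ∅ :=
        Finset.disjoint_iff_inter_eq_empty.1
          (Finset.disjoint_of_subset_left (Finset.mem_powersetCard.1 hT).1
            Finset.sdiff_disjoint)
      exact Finset.mem_union_left _
        (Finset.mem_filter.2 ⟨hsC, (hagree s hsC hdisj).trans hsi⟩)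
    · exact Finset.mem_union_right _ (Finset.mem_sdiff.2 ⟨hsC, hT⟩)
  have hle := (Finset.card_le_card hcover).trans (Finset.card_union_le _ _)
  have hsplit := Finset.card_sdiff_add_card_eq_card hsub
  rw [Finset.card_powersetCard, Finset.card_powersetCard, Finset.card_sdiff_of_subset hMC, hC]
    at hsplit
  have hmono : (n - m).choose k ≤ (n - M.card).choose k := Nat.choose_le_choose k (by omega)
  omega

theorem stmt2 {ι L : Type*} [DecidableEq ι]
    (n k : ℕ) (hk1 : 1 ≤ k) (hkn : k ≤ n)
    (C : Finset ι) (hC : C.card = n)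
    (m : ℕ) (hm : m ≤ n)
    (M : Finset ι) (hMC : M ⊆ C) (hMcard : M.card ≤ m)
    (A A' : Finset ι → L)
    (hagree : ∀ s ∈ C.powersetCard k, s ∩ M = ∅ → A s = A' s) :
    ∀ i : L, |labelProb n k C A' i - labelProb n k C A i| ≤
      1 - ((n - m).choose k : ℝ) / (n.choose k : ℝ) := by
  intro i
  let := Classical.decEq L
  have hpos : (0 : ℝ) < (n.choose k : ℝ) := by exact_mod_cast Nat.choose_pos hkn
  have h1 := card_filter_add_choose_le n k m C M hC hMC hMcard A A' hagree i
  have h2 := card_filter_add_choose_le n k m C M hC hMC hMcard A' A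
    (fun s hs hd => (hagree s hs hd).symm) i
  rw [← Nat.cast_le (α := ℝ)] at h1 h2
  push_cast at h1 h2
  unfold labelProb
  rw [← sub_div, abs_div, abs_of_pos hpos, one_sub_div hpos.ne']
  refine div_le_div_of_nonneg_right (abs_le.2 ⟨?_, ?_⟩) hpos.le <;> linarith
end

section
/- Let m be an integer with 0 ≤ m ≤ n, let M ⊆ C satisfy |M| ≤ m, and let A, A' agree on every k-element subset of C disjoint from M. Then for all labels y, i ∈ L, p_y' − p_i' ≥ (p_y − p_i) − (2 − 2·C(n−m,k)/C(n,k)). -/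
/-- Changing the predictions on subsamples that meet a set of at most `m` clients lowers a label
probability by at most `1 - C(n-m,k)/C(n,k)`. -/
theorem labelProb_le_add {ι L : Type*} [DecidableEq ι] {n k m : ℕ} (hkn : k ≤ n)
    {C M : Finset ι} (hC : C.card = n) (hMC : M ⊆ C) (hMcard : M.card ≤ m)
    {A A' : Finset ι → L}
    (hagree : ∀ s ∈ C.powersetCard k, s ∩ M = ∅ → A s = A' s) (j : L) :
    labelProb n k C A j ≤
      labelProb n k C A' j + (1 - ((n - m).choose k : ℝ) / (n.choose k : ℝ)) := by
  classical
  have hpos : (0 : ℝ) < (n.choose k : ℝ) := by exact_mod_cast Nat.choose_pos hkn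
  have hsub : (C.powersetCard k).filter (fun s => A s = j) ⊆
      (C.powersetCard k).filter (fun s => A' s = j) ∪
        (C.powersetCard k \ (C \ M).powersetCard k) := by
    intro s hs
    obtain ⟨hs, hj⟩ := Finset.mem_filter.1 hs
    by_cases h : s ∩ M = ∅
    · exact Finset.mem_union_left _ (Finset.mem_filter.2 ⟨hs, hagree s hs h ▸ hj⟩)
    · refine Finset.mem_union_right _ (Finset.mem_sdiff.2 ⟨hs, fun hs' => h ?_⟩)
      have hd := (Finset.subset_sdiff.1 (Finset.mem_powersetCard.1 hs').1).2
      exact Finset.disjoint_iff_inter_eq_empty.1 hd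
  have hcard := (Finset.card_le_card hsub).trans (Finset.card_union_le _ _)
  have hsplit := Finset.card_sdiff_add_card_eq_card
    (Finset.powersetCard_mono (n := k) (Finset.sdiff_subset (s := C) (t := M)))
  rw [Finset.card_powersetCard, Finset.card_powersetCard, Finset.card_sdiff_of_subset hMC, hC]
    at hsplit
  have hmono : (n - m).choose k ≤ (n - M.card).choose k :=
    Nat.choose_le_choose k (by omega)
  have key : ((C.powersetCard k).filter (fun s => A s = j)).card + (n - m).choose k ≤
      ((C.powersetCard k).filter (fun s => A' s = j)).card + n.choose k := by omega
  have key' : (((C.powersetCard k).filter (fun s => A s = j)).card : ℝ) + ((n - m).choose k : ℝ) ≤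
      (((C.powersetCard k).filter (fun s => A' s = j)).card : ℝ) + (n.choose k : ℝ) := by
    exact_mod_cast key
  have hdiv := div_le_div_of_nonneg_right key' hpos.le
  rw [add_div, add_div, div_self hpos.ne'] at hdiv
  have e : ∀ B : Finset ι → L, labelProb n k C B j =
      (((C.powersetCard k).filter (fun s => B s = j)).card : ℝ) / (n.choose k : ℝ) := by
    intro B
    unfold labelProb
    congr!
  rw [e A, e A']
  linarith

theorem stmt3 {ι L : Type*} [DecidableEq ι]
    (n k : ℕ) (hk1 : 1 ≤ k) (hkn : k ≤ n)
    (C : Finset ι) (hC : C.card = n)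
    (m : ℕ) (hm : m ≤ n)
    (M : Finset ι) (hMC : M ⊆ C) (hMcard : M.card ≤ m)
    (A A' : Finset ι → L)
    (hagree : ∀ s ∈ C.powersetCard k, s ∩ M = ∅ → A s = A' s) :
    ∀ y i : L, labelProb n k C A' y - labelProb n k C A' i ≥
      (labelProb n k C A y - labelProb n k C A i)
        - (2 - 2 * ((n - m).choose k : ℝ) / (n.choose k : ℝ)) := by
  intro y i
  have h1 := labelProb_le_add hkn hC hMC hMcard hagree y
  have h2 := labelProb_le_add hkn hC hMC hMcard (fun s hs h => (hagree s hs h).symm) i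
  rw [mul_div_assoc]
  linarith
end

section
/- (Tightness, Case 4.) Let n, k, m be integers with 1 ≤ k ≤ n and 1 ≤ m < n − k; write N = C(n,k) and c = C(n−m,k)/N. Let L be a set of labels with at least 3 elements, let y, z ∈ L be distinct, and let p_lb, p̄ be reals with 1 − c < p_lb ≤ 1 and 0 ≤ p̄ ≤ 1 − p_lb. Then there exist a finite set C with |C| = n, a set M ⊆ C with |M| = m, and functions A, A' from the k-element subsets of C to L agreeing on every k-element subset disjoint from M, such that p_y = ⌈p_lb·N⌉/N, p_z = ⌊p̄·N⌋/N, p_y' = (⌈p_lb·N⌉ + C(n−m,k) − N)/N, and p_z' = (⌊p̄·N⌋ + N − C(n−m,k))/N; consequently p_y' − p_z' = ⌈p_lb·N⌉/N − ⌊p̄·N⌋/N − (2 − 2c), and if additionally ⌈p_lb·N⌉/N − ⌊p̄·N⌋/N ≤ 2 − 2c then p_y' ≤ p_z'. -/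
/-- The label `y` on `Y`, `z` on `Z`, `w` on the rest of `V`, and `t` outside `V`
(when `Y` and `Z` are disjoint subsets of `V`). With `V` the family of subsamples avoiding the
malicious clients, `t = y` is the prediction before the attack and `t = z` the one after it. -/
def prediction {ι L : Type*} [DecidableEq ι] (Y Z V : Finset (Finset ι)) (y z w t : L)
    (s : Finset ι) : L :=
  if s ∈ Y then y else if s ∈ Z then z else if s ∈ V then w else t

lemma labelProb_of_filter_eq {ι L : Type*} (n k : ℕ) (C : Finset ι) (A : Finset ι → L) (i : L)
    (S : Finset (Finset ι)) (hS : ∀ s, s ∈ S ↔ s ∈ C.powersetCard k ∧ A s = i) :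
    labelProb n k C A i = (S.card : ℝ) / (n.choose k : ℝ) := by
  classical
  unfold labelProb
  congr 3
  ext s
  simp only [Finset.mem_filter, hS]

theorem stmt10 {L : Type*}
    (n k m : ℕ) (hk1 : 1 ≤ k) (hkn : k ≤ n) (hm1 : 1 ≤ m) (hm2 : m < n - k)
    (y z : L) (hyz : y ≠ z) (hL : ∃ w : L, w ≠ y ∧ w ≠ z)
    (plb pbar : ℝ)
    (hplb0 : 1 - ((n - m).choose k : ℝ) / (n.choose k : ℝ) < plb)
    (hplb1 : plb ≤ 1)
    (hpbar0 : 0 ≤ pbar) (hpbar1 : pbar ≤ 1 - plb) :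
    ∃ (C : Finset ℕ) (M : Finset ℕ) (A A' : Finset ℕ → L),
      C.card = n ∧ M ⊆ C ∧ M.card = m ∧
      (∀ s ∈ C.powersetCard k, s ∩ M = ∅ → A s = A' s) ∧
      labelProb n k C A y = (⌈plb * (n.choose k : ℝ)⌉ : ℝ) / (n.choose k : ℝ) ∧
      labelProb n k C A z = (⌊pbar * (n.choose k : ℝ)⌋ : ℝ) / (n.choose k : ℝ) ∧
      labelProb n k C A' y =
        ((⌈plb * (n.choose k : ℝ)⌉ : ℝ) + ((n - m).choose k : ℝ) - (n.choose k : ℝ))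
          / (n.choose k : ℝ) ∧
      labelProb n k C A' z =
        ((⌊pbar * (n.choose k : ℝ)⌋ : ℝ) + (n.choose k : ℝ) - ((n - m).choose k : ℝ))
          / (n.choose k : ℝ) ∧
      labelProb n k C A' y - labelProb n k C A' z =
        (⌈plb * (n.choose k : ℝ)⌉ : ℝ) / (n.choose k : ℝ)
          - (⌊pbar * (n.choose k : ℝ)⌋ : ℝ) / (n.choose k : ℝ)
          - (2 - 2 * ((n - m).choose k : ℝ) / (n.choose k : ℝ)) ∧
      ((⌈plb * (n.choose k : ℝ)⌉ : ℝ) / (n.choose k : ℝ)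
          - (⌊pbar * (n.choose k : ℝ)⌋ : ℝ) / (n.choose k : ℝ)
          ≤ 2 - 2 * ((n - m).choose k : ℝ) / (n.choose k : ℝ) →
        labelProb n k C A' y ≤ labelProb n k C A' z) := by
  classical
  obtain ⟨w, hwy, hwz⟩ := hL
  have hNpos : (0 : ℝ) < (n.choose k : ℝ) := by exact_mod_cast Nat.choose_pos hkn
  set N := n.choose k with hN
  set D := (n - m).choose k with hD
  have hDN : D ≤ N := Nat.choose_le_choose k (Nat.sub_le n m)
  have ha : (N : ℤ) - D ≤ ⌈plb * (N : ℝ)⌉ := by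
    have h : (N : ℝ) - D < plb * N := by
      have := mul_lt_mul_of_pos_right hplb0 hNpos
      rwa [sub_mul, one_mul, div_mul_cancel₀ _ hNpos.ne'] at this
    have h2 := h.trans_le (Int.le_ceil (plb * (N : ℝ)))
    exact_mod_cast h2.le
  have hb : 0 ≤ ⌊pbar * (N : ℝ)⌋ := Int.floor_nonneg.2 (by positivity)
  have hab : ⌈plb * (N : ℝ)⌉ + ⌊pbar * (N : ℝ)⌋ ≤ N := by
    -- `⌊p̄ N⌋ ≤ ⌊N - p_lb N⌋ = N - ⌈p_lb N⌉`
    have h : plb * (N : ℝ) ≤ ((N - ⌊pbar * (N : ℝ)⌋ : ℤ) : ℝ) := by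
      have := Int.floor_le (pbar * (N : ℝ))
      push_cast
      nlinarith
    have := Int.ceil_le.2 h
    omega
  generalize ⌈plb * (N : ℝ)⌉ = a at *
  generalize ⌊pbar * (N : ℝ)⌋ = b at *
  obtain ⟨q, hq⟩ := Int.eq_ofNat_of_zero_le (sub_nonneg.2 ha)
  obtain ⟨r, rfl⟩ := Int.eq_ofNat_of_zero_le hb
  obtain rfl : a = q + (N - D) := by omega
  set C := Finset.range n with hC
  set M := Finset.range m with hM
  have hMC : M ⊆ C := Finset.range_subset_range.2 (by omega)
  set U := C.powersetCard k with hU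
  set V := (C \ M).powersetCard k with hV
  have hVU : V ⊆ U := Finset.powersetCard_mono Finset.sdiff_subset
  have hUc : U.card = N := by simp [hU, hC, hN]
  have hVc : V.card = D := by
    rw [hV, Finset.card_powersetCard, Finset.card_sdiff_of_subset hMC, hC, hM,
      Finset.card_range, Finset.card_range]
  have hWc : ((U \ V).card : ℝ) = N - D := by
    rw [Finset.card_sdiff_of_subset hVU, hUc, hVc, Nat.cast_sub hDN]
  obtain ⟨Y, hYV, hYc⟩ := Finset.exists_subset_card_eq (s := V) (n := q) (by omega)
  obtain ⟨Z, hZV, hZc⟩ := Finset.exists_subset_card_eq (s := V \ Y) (n := r) (by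
    rw [Finset.card_sdiff_of_subset hYV]; omega)
  have hZ : ∀ s ∈ Z, s ∈ V ∧ s ∉ Y := fun s hs => Finset.mem_sdiff.1 (hZV hs)
  have hdY : Disjoint Y (U \ V) :=
    Finset.disjoint_left.2 fun s h1 h2 => (Finset.mem_sdiff.1 h2).2 (hYV h1)
  have hdZ : Disjoint Z (U \ V) :=
    Finset.disjoint_left.2 fun s h1 h2 => (Finset.mem_sdiff.1 h2).2 (hZ s h1).1
  have e1 : labelProb n k C (prediction Y Z V y z w y) y = ((q : ℝ) + (N - D)) / N := by
    rw [labelProb_of_filter_eq n k C _ _ (Y ∪ (U \ V)), Finset.card_union_of_disjoint hdY,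
      Nat.cast_add, hWc, hYc]
    intro s
    have h1 := @hVU s; have h2 := @hYV s; have h3 := hZ s
    simp only [prediction, Finset.mem_union, Finset.mem_sdiff]
    grind
  have e2 : labelProb n k C (prediction Y Z V y z w y) z = (r : ℝ) / N := by
    rw [labelProb_of_filter_eq n k C _ _ Z, hZc]
    intro s
    have h1 := @hVU s; have h2 := @hYV s; have h3 := hZ s
    simp only [prediction]
    grind
  have e3 : labelProb n k C (prediction Y Z V y z w z) y = (q : ℝ) / N := by
    rw [labelProb_of_filter_eq n k C _ _ Y, hYc]
    intro s
    have h1 := @hVU s; have h2 := @hYV s; have h3 := hZ s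
    simp only [prediction]
    grind
  have e4 : labelProb n k C (prediction Y Z V y z w z) z = ((r : ℝ) + (N - D)) / N := by
    rw [labelProb_of_filter_eq n k C _ _ (Z ∪ (U \ V)), Finset.card_union_of_disjoint hdZ,
      Nat.cast_add, hWc, hZc]
    intro s
    have h1 := @hVU s; have h2 := @hYV s; have h3 := hZ s
    simp only [prediction, Finset.mem_union, Finset.mem_sdiff]
    grind
  have hdiff : labelProb n k C (prediction Y Z V y z w z) y
      - labelProb n k C (prediction Y Z V y z w z) z
      = (((q + (N - D) : ℤ)) : ℝ) / N - ((r : ℤ) : ℝ) / N - (2 - 2 * (D : ℝ) / N) := by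
    rw [e3, e4]
    push_cast
    field_simp
    ring
  refine ⟨C, M, prediction Y Z V y z w y, prediction Y Z V y z w z, by simp [hC], hMC,
    by simp [hM], ?_, ?_, ?_, ?_, ?_, hdiff, fun h => ?_⟩
  · intro s hs hsM
    have hsV : s ∈ V := by
      rw [Finset.mem_powersetCard] at hs
      exact Finset.mem_powersetCard.2
        ⟨Finset.subset_sdiff.2 ⟨hs.1, Finset.disjoint_iff_inter_eq_empty.2 hsM⟩, hs.2⟩
    simp only [prediction, hsV, if_true]
  · rw [e1]; push_cast; ring
  · rw [e2]; push_cast; ring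
  · rw [e3]; push_cast; ring
  · rw [e4]; push_cast; ring
  · linarith
end
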